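/- Let T > 0 and ν > 0. Let u : ℝ² × [0,T] → ℝ², ω : ℝ² × [0,T] → ℝ, and θ : ℝ² × [0,T] → ℝ be smooth functions, ℤ²-periodic in x, such that for every t the field u(·,t) is divergence-free, and pointwise on ℝ² × [0,T]: ∂_t ω + u·∇ω = ν ∂₁²ω + ∂₁θ (the anisotropic vorticity equation) and ∂_t θ + u·∇θ = 0. Then for every t ∈ [0,T]: ‖ω(t)‖_{L²}² + ν ∫₀ᵗ ‖∂₁ω(s)‖_{L²}² ds ≤ ‖ω(0)‖_{L²}² + (t/ν) ‖θ(0)‖_{L²}², where all norms are over Q = [0,1]². -/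

import Mathlib

/-!
The argument is the classical `L²` energy estimate. For a density `g(t,x)` whose time derivative is
bounded by a spatial divergence of a periodic field plus a remainder `h`, integration over the torus
kills the divergence (`integral_div_eq_zero`), so the fundamental theorem of calculus in time and
Fubini give `∫ g(t) ≤ ∫ g(0) + ∫₀ᵗ ∫ h` (`energy_le`).

With `g = θ²` and `h = 0` (as `u` is divergence-free, `u·∇(θ²) = div (θ² u)`) this shows that
`‖θ(t)‖²` does not exceed `‖θ(0)‖²`. With `g = ω²`, the identity
`2ω ∂ₜω = ∂₁(2ν ω ∂₁ω + 2ωθ) - div (ω² u) - 2ν (∂₁ω)² - 2θ ∂₁ω`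
and Young's inequality `-2θ ∂₁ω ≤ ν (∂₁ω)² + θ²/ν` allow `h = -ν (∂₁ω)² + θ²/ν`, and the bound on
`θ` turns the resulting inequality into the claim.
-/

open MeasureTheory

/-- Partial derivative in direction `j`. -/
noncomputable def pd (j : Fin 2) (f : (Fin 2 → ℝ) → ℝ) (x : Fin 2 → ℝ) : ℝ :=
  fderiv ℝ f x (Pi.single j 1)

/-- `f` is `ℤ²`-periodic. -/
def Periodic2 (f : (Fin 2 → ℝ) → ℝ) : Prop :=
  ∀ (x : Fin 2 → ℝ) (k : Fin 2 → ℤ), f (x + fun i => (k i : ℝ)) = f x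

/-- The fundamental domain `Q = [0,1]²`. -/
def Q2 : Set (Fin 2 → ℝ) := Set.Icc 0 1

/-! ### Calculus of `pd` and periodicity -/

lemma pd_add (j : Fin 2) {f g : (Fin 2 → ℝ) → ℝ} (x : Fin 2 → ℝ)
    (hf : Differentiable ℝ f) (hg : Differentiable ℝ g) :
    pd j (fun y => f y + g y) x = pd j f x + pd j g x := by
  simp only [pd]
  rw [fderiv_fun_add (hf x) (hg x)]
  rfl

lemma pd_mul (j : Fin 2) {f g : (Fin 2 → ℝ) → ℝ} (x : Fin 2 → ℝ)
    (hf : Differentiable ℝ f) (hg : Differentiable ℝ g) :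
    pd j (fun y => f y * g y) x = f x * pd j g x + g x * pd j f x := by
  simp only [pd]
  rw [fderiv_fun_mul (hf x) (hg x)]
  simp

lemma pd_const_mul (j : Fin 2) (c : ℝ) {f : (Fin 2 → ℝ) → ℝ} (x : Fin 2 → ℝ)
    (hf : Differentiable ℝ f) :
    pd j (fun y => c * f y) x = c * pd j f x := by
  simp only [pd]
  rw [fderiv_const_mul (hf x)]
  simp

lemma Periodic2.pd {f : (Fin 2 → ℝ) → ℝ} (hf : Periodic2 f) (j : Fin 2) :
    Periodic2 (pd j f) := by
  intro x k
  have h : (fun y => f (y + fun i => (k i : ℝ))) = f := funext fun y => hf y k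
  simp only [_root_.pd]
  rw [← fderiv_comp_add_right, h]

/-- The spatial partial derivative of a jointly smooth function is jointly smooth. -/
lemma contDiff_pd (j : Fin 2) {f : ℝ → (Fin 2 → ℝ) → ℝ}
    (hf : ContDiff ℝ (⊤ : ℕ∞) (fun q : ℝ × (Fin 2 → ℝ) => f q.1 q.2)) :
    ContDiff ℝ (⊤ : ℕ∞) (fun q : ℝ × (Fin 2 → ℝ) => pd j (f q.1) q.2) := by
  simp only [pd]
  have h : ContDiff ℝ (⊤ : ℕ∞)
      (Function.uncurry fun (q : ℝ × (Fin 2 → ℝ)) (y : Fin 2 → ℝ) => f q.1 y) :=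
    hf.comp ((contDiff_fst.comp contDiff_fst).prodMk contDiff_snd)
  exact ContDiff.fderiv_apply h contDiff_snd contDiff_const (by simp)

lemma contDiff_slice {F : Type*} [NormedAddCommGroup F] [NormedSpace ℝ F]
    {f : ℝ → (Fin 2 → ℝ) → F}
    (hf : ContDiff ℝ (⊤ : ℕ∞) (fun q : ℝ × (Fin 2 → ℝ) => f q.1 q.2)) (t : ℝ) :
    ContDiff ℝ (⊤ : ℕ∞) (f t) :=
  hf.comp (contDiff_const.prodMk contDiff_id)

lemma contDiff_time {f : ℝ → (Fin 2 → ℝ) → ℝ}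
    (hf : ContDiff ℝ (⊤ : ℕ∞) (fun q : ℝ × (Fin 2 → ℝ) => f q.1 q.2)) (x : Fin 2 → ℝ) :
    ContDiff ℝ (⊤ : ℕ∞) (fun s => f s x) :=
  hf.comp (contDiff_id.prodMk contDiff_const)

lemma continuous_deriv_time {f : ℝ → (Fin 2 → ℝ) → ℝ}
    (hf : ContDiff ℝ (⊤ : ℕ∞) (fun q : ℝ × (Fin 2 → ℝ) => f q.1 q.2)) :
    Continuous (fun q : ℝ × (Fin 2 → ℝ) => deriv (fun s => f s q.2) q.1) := by
  simp only [← fderiv_apply_one_eq_deriv]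
  have h : ContDiff ℝ (⊤ : ℕ∞)
      (Function.uncurry fun (q : ℝ × (Fin 2 → ℝ)) (s : ℝ) => f s q.2) :=
    hf.comp (contDiff_snd.prodMk (contDiff_snd.comp contDiff_fst))
  exact (ContDiff.fderiv_apply (n := (⊤ : ℕ∞)) h contDiff_fst contDiff_const
    (by simp)).continuous

lemma isCompact_Q2 : IsCompact Q2 := isCompact_Icc

lemma integrableOn_Q2 {f : (Fin 2 → ℝ) → ℝ} (hf : Continuous f) : IntegrableOn f Q2 :=
  hf.continuousOn.integrableOn_compact isCompact_Q2

/-! ### The energy inequality -/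

/-- The divergence of a periodic field has zero mean: opposite faces contribute equally. -/
lemma integral_div_eq_zero (V : Fin 2 → (Fin 2 → ℝ) → ℝ)
    (hV : ∀ j, ContDiff ℝ (⊤ : ℕ∞) (V j)) (hp : ∀ j, Periodic2 (V j)) :
    ∫ x in Q2, ∑ j : Fin 2, pd j (V j) x = 0 := by
  have hcont : Continuous fun x => ∑ j : Fin 2, pd j (V j) x :=
    continuous_finsetSum _ fun j _ =>
      ((hV j).continuous_fderiv (by simp)).clm_apply continuous_const
  have key := integral_divergence_of_hasFDerivAt_off_countable' (n := 1)
    (0 : Fin 2 → ℝ) 1 zero_le_one V (fun i x => fderiv ℝ (V i) x) ∅ Set.countable_empty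
    (fun i => (hV i).continuous.continuousOn)
    (fun x _ i => ((hV i).differentiable (by simp) x).hasFDerivAt)
    (integrableOn_Q2 hcont)
  refine Eq.trans key (Finset.sum_eq_zero fun i _ => ?_)
  rw [sub_eq_zero]
  congr 1
  funext x
  rw [← hp i (i.insertNth ((0 : Fin 2 → ℝ) i) x) (Pi.single i 1)]
  congr 1
  funext k
  refine Fin.succAboveCases i ?_ (fun m => ?_) k
  · simp
  · simp

/-- Fundamental theorem of calculus in time for a spatial integral. -/
lemma integral_sub_eq {g : ℝ → (Fin 2 → ℝ) → ℝ}
    (hg : ContDiff ℝ (⊤ : ℕ∞) (fun q : ℝ × (Fin 2 → ℝ) => g q.1 q.2)) (t : ℝ) :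
    ∫ s in (0 : ℝ)..t, (∫ x in Q2, deriv (fun r => g r x) s)
      = (∫ x in Q2, g t x) - ∫ x in Q2, g 0 x := by
  have hc := continuous_deriv_time hg
  rw [intervalIntegral_integral_swap]
  · rw [← integral_sub (integrableOn_Q2 (contDiff_slice hg t).continuous)
      (integrableOn_Q2 (contDiff_slice hg 0).continuous)]
    congr 1
    funext x
    refine intervalIntegral.integral_deriv_eq_sub
      (fun s _ => (contDiff_time hg x).differentiable (by simp) s) ?_
    exact ((contDiff_time hg x).continuous_deriv (by simp)).intervalIntegrable _ _
  · rw [Measure.prod_restrict]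
    refine IntegrableOn.mono_set ?_ (Set.prod_mono_left Set.uIoc_subset_uIcc)
    exact hc.continuousOn.integrableOn_compact (isCompact_uIcc.prod isCompact_Q2)

/-- If `∂ₜ g ≤ div V + h` with `V` periodic, then `∫ g` grows at most by the integral of `h`. -/
lemma energy_le {T : ℝ} {g h : ℝ → (Fin 2 → ℝ) → ℝ} (V : ℝ → Fin 2 → (Fin 2 → ℝ) → ℝ)
    (hg : ContDiff ℝ (⊤ : ℕ∞) (fun q : ℝ × (Fin 2 → ℝ) => g q.1 q.2))
    (hh : Continuous (fun q : ℝ × (Fin 2 → ℝ) => h q.1 q.2))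
    (hV : ∀ s j, ContDiff ℝ (⊤ : ℕ∞) (V s j)) (hp : ∀ s j, Periodic2 (V s j))
    (hle : ∀ s ∈ Set.Icc (0 : ℝ) T, ∀ x,
      deriv (fun r => g r x) s ≤ ∑ j : Fin 2, pd j (V s j) x + h s x) :
    ∀ t ∈ Set.Icc (0 : ℝ) T,
      ∫ x in Q2, g t x ≤ (∫ x in Q2, g 0 x) + ∫ s in (0 : ℝ)..t, ∫ x in Q2, h s x := by
  intro t ht
  have hc := continuous_deriv_time hg
  have hmono : ∫ s in (0 : ℝ)..t, (∫ x in Q2, deriv (fun r => g r x) s)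
      ≤ ∫ s in (0 : ℝ)..t, ∫ x in Q2, h s x := by
    refine intervalIntegral.integral_mono_on ht.1 ?_ ?_ fun s hs => ?_
    · exact (continuous_parametric_integral_of_continuous
        (f := fun s x => deriv (fun r => g r x) s) hc isCompact_Q2).intervalIntegrable _ _
    · exact (continuous_parametric_integral_of_continuous
        (f := h) hh isCompact_Q2).intervalIntegrable _ _
    · have hdivc : Continuous fun x => ∑ j : Fin 2, pd j (V s j) x :=
        continuous_finsetSum _ fun j _ =>
          ((hV s j).continuous_fderiv (by simp)).clm_apply continuous_const
      have hhs : Continuous (h s) := hh.comp (continuous_const.prodMk continuous_id)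
      have hgs : Continuous fun x => deriv (fun r => g r x) s :=
        hc.comp (continuous_const.prodMk continuous_id)
      calc ∫ x in Q2, deriv (fun r => g r x) s
          ≤ ∫ x in Q2, (∑ j : Fin 2, pd j (V s j) x + h s x) :=
            integral_mono (integrableOn_Q2 hgs) (integrableOn_Q2 (hdivc.add hhs))
              fun x => hle s ⟨hs.1, hs.2.trans ht.2⟩ x
        _ = ∫ x in Q2, h s x := by
            rw [integral_add (integrableOn_Q2 hdivc) (integrableOn_Q2 hhs),
              integral_div_eq_zero _ (hV s) (hp s), zero_add]
  rw [integral_sub_eq hg] at hmono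
  linarith

lemma deriv_sq_time {f : ℝ → (Fin 2 → ℝ) → ℝ}
    (hf : ContDiff ℝ (⊤ : ℕ∞) (fun q : ℝ × (Fin 2 → ℝ) => f q.1 q.2)) (s : ℝ) (x : Fin 2 → ℝ) :
    deriv (fun r => f r x ^ 2) s = 2 * f s x * deriv (fun r => f r x) s := by
  have h := ((contDiff_time hf x).differentiable (by simp) s).hasDerivAt.pow 2
  simpa [Pi.pow_def] using h.deriv

/-- `div (f² u) = 2 f u·∇f` for divergence-free `u`, written for the flux `-f² u`. -/
lemma div_flux {f : (Fin 2 → ℝ) → ℝ} {v : (Fin 2 → ℝ) → (Fin 2 → ℝ)}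
    (hf : Differentiable ℝ f) (hv : ∀ j, Differentiable ℝ fun y => v y j) (x : Fin 2 → ℝ)
    (hdiv : ∑ j : Fin 2, pd j (fun y => v y j) x = 0) :
    ∑ j : Fin 2, pd j (fun y => (-1) * (v y j * (f y * f y))) x
      = -(2 * f x * ∑ j : Fin 2, v x j * pd j f x) := by
  have hff : Differentiable ℝ fun y => f y * f y := hf.mul hf
  have h : ∀ j, pd j (fun y => (-1) * (v y j * (f y * f y))) x
      = -(2 * f x * (v x j * pd j f x)) - f x * f x * pd j (fun y => v y j) x := by
    intro j
    rw [pd_const_mul j _ x ((hv j).fun_mul hff), pd_mul j x (hv j) hff, pd_mul j x hf hf]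
    ring
  rw [Fin.sum_univ_two] at hdiv
  simp only [h, Fin.sum_univ_two]
  linear_combination (-(f x * f x)) * hdiv

theorem stmt10
    (T ν : ℝ) (hT : 0 < T) (hν : 0 < ν)
    (u : ℝ → (Fin 2 → ℝ) → (Fin 2 → ℝ)) (ω θ : ℝ → (Fin 2 → ℝ) → ℝ)
    (hu : ContDiff ℝ (⊤ : ℕ∞) (fun q : ℝ × (Fin 2 → ℝ) => u q.1 q.2))
    (hω : ContDiff ℝ (⊤ : ℕ∞) (fun q : ℝ × (Fin 2 → ℝ) => ω q.1 q.2))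
    (hθ : ContDiff ℝ (⊤ : ℕ∞) (fun q : ℝ × (Fin 2 → ℝ) => θ q.1 q.2))
    (hup : ∀ t i, Periodic2 (fun x => u t x i))
    (hωp : ∀ t, Periodic2 (ω t)) (hθp : ∀ t, Periodic2 (θ t))
    (hdiv : ∀ t x, ∑ j : Fin 2, pd j (fun y => u t y j) x = 0)
    (hvort : ∀ t ∈ Set.Icc (0 : ℝ) T, ∀ x,
      deriv (fun s => ω s x) t + ∑ j : Fin 2, u t x j * pd j (ω t) x
        = ν * pd 0 (pd 0 (ω t)) x + pd 0 (θ t) x)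
    (htheta : ∀ t ∈ Set.Icc (0 : ℝ) T, ∀ x,
      deriv (fun s => θ s x) t + ∑ j : Fin 2, u t x j * pd j (θ t) x = 0) :
    ∀ t ∈ Set.Icc (0 : ℝ) T,
      (∫ x in Q2, (ω t x) ^ 2)
          + ν * ∫ s in (0 : ℝ)..t, (∫ x in Q2, (pd 0 (ω s) x) ^ 2)
        ≤ (∫ x in Q2, (ω 0 x) ^ 2) + (t / ν) * ∫ x in Q2, (θ 0 x) ^ 2 := by
  have hus : ∀ s j, ContDiff ℝ (⊤ : ℕ∞) fun y => u s y j := fun s j =>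
    contDiff_pi.1 (contDiff_slice hu s) j
  have hωs := contDiff_slice hω
  have hθs := contDiff_slice hθ
  have hω1 := contDiff_pd 0 hω
  have hω1s := contDiff_slice (f := fun s => pd 0 (ω s)) hω1
  have hud : ∀ s j, Differentiable ℝ fun y => u s y j := fun s j =>
    (hus s j).differentiable (by simp)
  have hωd : ∀ s, Differentiable ℝ (ω s) := fun s => (hωs s).differentiable (by simp)
  have hθd : ∀ s, Differentiable ℝ (θ s) := fun s => (hθs s).differentiable (by simp)
  have hω1d : ∀ s, Differentiable ℝ (pd 0 (ω s)) := fun s => (hω1s s).differentiable (by simp)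
  have hθle : ∀ s ∈ Set.Icc (0 : ℝ) T, ∫ x in Q2, θ s x ^ 2 ≤ ∫ x in Q2, θ 0 x ^ 2 := by
    intro s hs
    have h := energy_le (T := T) (g := fun s x => θ s x ^ 2) (h := fun _ _ => 0)
      (fun s j y => (-1) * (u s y j * (θ s y * θ s y)))
      (hθ.pow 2) continuous_const
      (fun s j => contDiff_const.mul ((hus s j).mul ((hθs s).mul (hθs s))))
      (fun s j x k => by
        have h1 := hup s j x k
        have h2 := hθp s x k
        simp only at h1
        simp only [h1, h2])
      (fun s hs x => by
        rw [deriv_sq_time hθ, div_flux (hθd s) (hud s) x (hdiv s x)]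
        have := htheta s hs x
        refine le_of_eq ?_
        linear_combination (2 * θ s x) * this) s hs
    simpa using h
  intro t ht
  have hhc : Continuous fun q : ℝ × (Fin 2 → ℝ) =>
      (-ν) * pd 0 (ω q.1) q.2 ^ 2 + ν⁻¹ * θ q.1 q.2 ^ 2 :=
    (continuous_const.mul (hω1.continuous.pow 2)).add (continuous_const.mul (hθ.continuous.pow 2))
  -- `W` is the part `(2ν ω ∂₁ω + 2ωθ) e₁` of the flux; the other part is `-ω² u`.
  let W : ℝ → Fin 2 → (Fin 2 → ℝ) → ℝ := fun s j y =>
    (if j = 0 then 2 else 0) * (ω s y * (ν * pd 0 (ω s) y + θ s y))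
  have hWc : ∀ s j, ContDiff ℝ (⊤ : ℕ∞) (W s j) := fun s j =>
    contDiff_const.mul ((hωs s).mul ((contDiff_const.mul (hω1s s)).add (hθs s)))
  have hFc : ∀ s j, ContDiff ℝ (⊤ : ℕ∞) fun y => (-1) * (u s y j * (ω s y * ω s y)) := fun s j =>
    contDiff_const.mul ((hus s j).mul ((hωs s).mul (hωs s)))
  have h := energy_le (T := T) (g := fun s x => ω s x ^ 2)
    (h := fun s x => (-ν) * pd 0 (ω s) x ^ 2 + ν⁻¹ * θ s x ^ 2)
    (fun s j y => W s j y + (-1) * (u s y j * (ω s y * ω s y)))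
    (hω.pow 2) hhc (fun s j => (hWc s j).add (hFc s j))
    (fun s j x k => by
      have h1 := hup s j x k
      have h2 := hθp s x k
      have h3 := hωp s x k
      have h4 := (hωp s).pd 0 x k
      simp only at h1
      simp only [W, h1, h2, h3, h4])
    (fun s hs x => by
      have hsum : ∑ j : Fin 2, pd j (fun y => W s j y + (-1) * (u s y j * (ω s y * ω s y))) x
          = ∑ j : Fin 2, pd j (W s j) x
            + ∑ j : Fin 2, pd j (fun y => (-1) * (u s y j * (ω s y * ω s y))) x := by
        rw [← Finset.sum_add_distrib]
        exact Finset.sum_congr rfl fun j _ =>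
          pd_add j x ((hWc s j).differentiable (by simp)) ((hFc s j).differentiable (by simp))
      have hνω : Differentiable ℝ fun y => ν * pd 0 (ω s) y := (hω1d s).const_mul ν
      have hsumd : Differentiable ℝ fun y => ν * pd 0 (ω s) y + θ s y := hνω.add (hθd s)
      have hW : ∀ j, pd j (W s j) x = (if j = 0 then 2 else 0) *
          (ω s x * (ν * pd j (pd 0 (ω s)) x + pd j (θ s) x)
            + (ν * pd 0 (ω s) x + θ s x) * pd j (ω s) x) := by
        intro j
        simp only [W]
        rw [pd_const_mul j _ x ((hωd s).fun_mul hsumd), pd_mul j x (hωd s) hsumd,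
          pd_add j x hνω (hθd s), pd_const_mul j _ x (hω1d s)]
      rw [hsum, deriv_sq_time hω, div_flux (hωd s) (hud s) x (hdiv s x)]
      simp only [hW]
      have hv := hvort s hs x
      -- Young's inequality, as `ν⁻¹ (ν ∂₁ω + θ)² ≥ 0`.
      have hY : 0 ≤ ν * pd 0 (ω s) x ^ 2 + 2 * θ s x * pd 0 (ω s) x + ν⁻¹ * θ s x ^ 2 := by
        have h0 : 0 ≤ ν⁻¹ * (ν * pd 0 (ω s) x + θ s x) ^ 2 := by positivity
        have h1 : ν⁻¹ * (ν * pd 0 (ω s) x + θ s x) ^ 2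
            = ν * pd 0 (ω s) x ^ 2 + 2 * θ s x * pd 0 (ω s) x + ν⁻¹ * θ s x ^ 2 := by
          field_simp
          ring
        rwa [h1] at h0
      rw [Fin.sum_univ_two (f := fun j : Fin 2 => (if j = 0 then (2 : ℝ) else 0) * _)]
      simp only [if_true, one_ne_zero, if_false]
      generalize ∑ j : Fin 2, u s x j * pd j (ω s) x = A at hv ⊢
      have hd : deriv (fun r => ω r x) s = ν * pd 0 (pd 0 (ω s)) x + pd 0 (θ s) x - A := by
        linarith
      rw [hd]
      linarith) t ht
  have hi1 : Continuous fun s => ∫ x in Q2, pd 0 (ω s) x ^ 2 :=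
    continuous_parametric_integral_of_continuous (f := fun s x => pd 0 (ω s) x ^ 2)
      (hω1.continuous.fun_pow 2) isCompact_Q2
  have hi2 : Continuous fun s => ∫ x in Q2, θ s x ^ 2 :=
    continuous_parametric_integral_of_continuous (f := fun s x => θ s x ^ 2)
      (hθ.continuous.fun_pow 2) isCompact_Q2
  have hsplit : ∫ s in (0 : ℝ)..t, ∫ x in Q2, ((-ν) * pd 0 (ω s) x ^ 2 + ν⁻¹ * θ s x ^ 2)
      = (-ν) * (∫ s in (0 : ℝ)..t, ∫ x in Q2, pd 0 (ω s) x ^ 2)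
        + ν⁻¹ * ∫ s in (0 : ℝ)..t, ∫ x in Q2, θ s x ^ 2 := by
    rw [← intervalIntegral.integral_const_mul, ← intervalIntegral.integral_const_mul,
      ← intervalIntegral.integral_add ((continuous_const.fun_mul hi1).intervalIntegrable _ _)
        ((continuous_const.fun_mul hi2).intervalIntegrable _ _)]
    congr 1
    funext s
    rw [integral_add (integrableOn_Q2 (continuous_const.fun_mul ((hω1s s).continuous.fun_pow 2)))
      (integrableOn_Q2 (continuous_const.fun_mul ((hθs s).continuous.fun_pow 2))),
      integral_const_mul, integral_const_mul]
  have hθint : ∫ s in (0 : ℝ)..t, ∫ x in Q2, θ s x ^ 2 ≤ t * ∫ x in Q2, θ 0 x ^ 2 := by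
    have h1 := intervalIntegral.integral_mono_on ht.1 (hi2.intervalIntegrable 0 t)
      (continuous_const.intervalIntegrable (μ := volume) 0 t)
      (fun s hs => hθle s ⟨hs.1, hs.2.trans ht.2⟩)
    simpa using h1
  have hfin := mul_le_mul_of_nonneg_left hθint (inv_nonneg.2 hν.le)
  rw [hsplit] at h
  have e : t / ν * ∫ x in Q2, θ 0 x ^ 2 = ν⁻¹ * (t * ∫ x in Q2, θ 0 x ^ 2) := by
    rw [div_eq_mul_inv]
    ring
  rw [e]
  linarith
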